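/- arXiv:1609.02050 — 2 statements merged into one kernel-verified Lean document; each statement's English description precedes it below -/
import Mathlib

section
/- Let X ⊆ ℝ^d be a t-bonded set and ρ₀ > 0 such that: (1) any two points of X whose ρ₀-clusters are equivalent also have equivalent (ρ₀ + t)-clusters; (2) S_x(ρ₀) = S_x(ρ₀ + t) for every x ∈ X. Then for any two points x, x' ∈ X whose ρ₀-clusters are equivalent there exists g ∈ Sym(X) with g(x) = x'. Consequently, the orbits of Sym(X) on X are exactly the classes of points of X with pairwise equivalent ρ₀-clusters. -/
/-!
Let `g` be an isometry carrying the `ρ₀`-cluster of `x` onto that of `x'`. By (1) some isometry `h`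
carries the larger `(ρ₀ + t)`-cluster of `x` onto that of `x'`. By (2) the symmetry `h⁻¹g` of the
`ρ₀`-cluster of `x` preserves its `(ρ₀ + t)`-cluster, so `g` also carries that larger cluster onto
its counterpart at `x'`. It contains the `ρ₀`-cluster of every point of `X` within distance `t` of
`x`. Along `t`-chains, `g` therefore carries the `ρ₀`-cluster of each point of `X` onto that of its
image, and in particular maps `X` into `X`; the same holds for `g⁻¹`.
-/

open Metric

/-- A Delone set in `ℝ^d` with parameters `r, R > 0`: every open ball of radius `r`
contains at most one point of `X` and every closed ball of radius `R` contains at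
least one point of `X`. -/
def IsDeloneSet {d : ℕ} (X : Set (EuclideanSpace ℝ (Fin d))) (r R : ℝ) : Prop :=
  0 < r ∧ 0 < R ∧
    (∀ c : EuclideanSpace ℝ (Fin d), (X ∩ Metric.ball c r).Subsingleton) ∧
    (∀ c : EuclideanSpace ℝ (Fin d), (X ∩ Metric.closedBall c R).Nonempty)

/-- A `t`-chain in `X` joining `x` to `x'`: a finite sequence of points of `X`
starting at `x`, ending at `x'`, with consecutive distances at most `t`. -/
def TChain {d : ℕ} (X : Set (EuclideanSpace ℝ (Fin d))) (t : ℝ)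
    (x x' : EuclideanSpace ℝ (Fin d)) : Prop :=
  ∃ (m : ℕ) (c : ℕ → EuclideanSpace ℝ (Fin d)),
    c 0 = x ∧ c m = x' ∧ (∀ i ≤ m, c i ∈ X) ∧
    ∀ i < m, dist (c i) (c (i + 1)) ≤ t

/-- `X` is uniformly discrete: some open ball radius `r > 0` so that every open
ball of radius `r` contains at most one point of `X`. -/
def UniformlyDiscrete {d : ℕ} (X : Set (EuclideanSpace ℝ (Fin d))) : Prop :=
  ∃ r > 0, ∀ c : EuclideanSpace ℝ (Fin d), (X ∩ Metric.ball c r).Subsingleton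

/-- `X` is a `t`-bonded set: uniformly discrete, full affine span, and any two
points of `X` are joined by a `t`-chain in `X`. -/
def TBonded {d : ℕ} (X : Set (EuclideanSpace ℝ (Fin d))) (t : ℝ) : Prop :=
  UniformlyDiscrete X ∧ affineSpan ℝ X = ⊤ ∧
    ∀ x ∈ X, ∀ x' ∈ X, TChain X t x x'

/-- The `ρ`-cluster of `X` centered at `x`: points of `X` at distance at most `ρ` from `x`. -/
def cluster {d : ℕ} (X : Set (EuclideanSpace ℝ (Fin d)))
    (x : EuclideanSpace ℝ (Fin d)) (ρ : ℝ) : Set (EuclideanSpace ℝ (Fin d)) :=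
  X ∩ Metric.closedBall x ρ

/-- The symmetry group `S_x(ρ)` of the cluster `C_x(ρ)`: isometries of `ℝ^d`
fixing `x` and mapping the cluster onto itself. -/
def symmGroup {d : ℕ} (X : Set (EuclideanSpace ℝ (Fin d)))
    (x : EuclideanSpace ℝ (Fin d)) (ρ : ℝ) :
    Set (EuclideanSpace ℝ (Fin d) ≃ᵢ EuclideanSpace ℝ (Fin d)) :=
  {s | s x = x ∧ s '' cluster X x ρ = cluster X x ρ}

/-- `Sym(X)`: the isometries of `ℝ^d` mapping `X` onto `X`. -/
def SymX {d : ℕ} (X : Set (EuclideanSpace ℝ (Fin d))) :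
    Set (EuclideanSpace ℝ (Fin d) ≃ᵢ EuclideanSpace ℝ (Fin d)) :=
  {g | g '' X = X}

/-- Equivalence of the clusters `C_x(ρ)` and `C_{x'}(ρ)`: some isometry of `ℝ^d`
sends `x` to `x'` and `C_x(ρ)` onto `C_{x'}(ρ)`. -/
def ClusterEquiv {d : ℕ} (X : Set (EuclideanSpace ℝ (Fin d))) (ρ : ℝ)
    (x x' : EuclideanSpace ℝ (Fin d)) : Prop :=
  ∃ g : EuclideanSpace ℝ (Fin d) ≃ᵢ EuclideanSpace ℝ (Fin d),
    g x = x' ∧ g '' cluster X x ρ = cluster X x' ρ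

/-- The rank of the cluster `C_x(ρ)`: the dimension of its affine span. -/
noncomputable def clusterRank {d : ℕ} (X : Set (EuclideanSpace ℝ (Fin d)))
    (x : EuclideanSpace ℝ (Fin d)) (ρ : ℝ) : ℕ :=
  Module.finrank ℝ (affineSpan ℝ (cluster X x ρ)).direction

section PseudoMetricSpace

variable {M : Type*} [PseudoMetricSpace M] {X : Set M} {g h : M ≃ᵢ M} {x x' x'' y : M} {ρ σ t : ℝ}

/-- The isometry `g` is an equivalence of the clusters `C_x(ρ)` and `C_{x'}(ρ)`. Its instances with
`x' = x` are the cluster symmetries `S_x(ρ)`, so that both local conditions of the theorem speak of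
this one relation, which is a groupoid under composition of isometries. -/
def MapsCluster (X : Set M) (ρ : ℝ) (g : M ≃ᵢ M) (x x' : M) : Prop :=
  g x = x' ∧ g '' (X ∩ closedBall x ρ) = X ∩ closedBall x' ρ

/-- A single link of a `t`-chain: its reflexive transitive closure relates the points of `X` that a
`t`-chain joins. Both ends are required to lie in `X`. -/
def Bond (X : Set M) (t : ℝ) (y z : M) : Prop :=
  y ∈ X ∧ z ∈ X ∧ dist y z ≤ t

namespace MapsCluster

theorem symm (hg : MapsCluster X ρ g x x') : MapsCluster X ρ g.symm x' x := by
  obtain ⟨rfl, himage⟩ := hg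
  refine ⟨g.symm_apply_apply x, ?_⟩
  rw [← himage, Set.image_image]
  simp

theorem trans (hg : MapsCluster X ρ g x x') (hh : MapsCluster X ρ h x' x'') :
    MapsCluster X ρ (g.trans h) x x'' := by
  obtain ⟨rfl, hg_image⟩ := hg
  obtain ⟨rfl, hh_image⟩ := hh
  refine ⟨rfl, ?_⟩
  rw [← hh_image, ← hg_image, Set.image_image]
  rfl

theorem right_mem (hg : MapsCluster X ρ g x x') (hρ : 0 ≤ ρ) (hx : x ∈ X) : x' ∈ X := by
  obtain ⟨rfl, himage⟩ := hg
  exact (himage.subset (Set.mem_image_of_mem g ⟨hx, mem_closedBall_self hρ⟩)).1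

theorem of_image_eq (hg : g '' X = X) (x : M) (ρ : ℝ) : MapsCluster X ρ g x (g x) :=
  ⟨rfl, by rw [Set.image_inter g.injective, hg, g.image_closedBall]⟩

theorem of_add_dist_le (hg : MapsCluster X σ g x x') (hy : ρ + dist y x ≤ σ) :
    MapsCluster X ρ g y (g y) := by
  obtain ⟨rfl, himage⟩ := hg
  have hball : closedBall y ρ ⊆ closedBall x σ := closedBall_subset_closedBall' hy
  have hball_image : closedBall (g y) ρ ⊆ closedBall (g x) σ :=
    closedBall_subset_closedBall' (by rwa [g.dist_eq])
  refine ⟨rfl, ?_⟩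
  calc g '' (X ∩ closedBall y ρ)
      = g '' (X ∩ closedBall x σ ∩ closedBall y ρ) := by
        rw [Set.inter_assoc, Set.inter_eq_right.2 hball]
    _ = X ∩ closedBall (g x) σ ∩ closedBall (g y) ρ := by
        rw [Set.image_inter g.injective, himage, g.image_closedBall]
    _ = X ∩ closedBall (g y) ρ := by
        rw [Set.inter_assoc, Set.inter_eq_right.2 hball_image]

theorem of_le (hg : MapsCluster X σ g x x') (hρσ : ρ ≤ σ) : MapsCluster X ρ g x x' :=
  hg.1 ▸ hg.of_add_dist_le (by rwa [dist_self, add_zero])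

theorem extend (hg : MapsCluster X ρ g x x') (hρσ : ρ ≤ σ) (hh : MapsCluster X σ h x x')
    (hsymm : ∀ s : M ≃ᵢ M, MapsCluster X ρ s x x → MapsCluster X σ s x x) :
    MapsCluster X σ g x x' := by
  have hquot : MapsCluster X σ (g.trans h.symm) x x := hsymm _ (hg.trans (hh.of_le hρσ).symm)
  have hfactor : (g.trans h.symm).trans h = g := by ext; simp
  exact hfactor ▸ hquot.trans hh

theorem of_reflTransGen_bond
    (hext : ∀ x ∈ X, ∀ x', MapsCluster X ρ g x x' → MapsCluster X (ρ + t) g x x')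
    (hg : MapsCluster X ρ g x x') (hxy : Relation.ReflTransGen (Bond X t) x y) :
    MapsCluster X ρ g y (g y) := by
  induction hxy with
  | refl => exact hg.1.symm ▸ hg
  | tail _ hbond ih =>
    obtain ⟨hy, -, hdist⟩ := hbond
    exact (hext _ hy _ ih).of_add_dist_le (by rw [dist_comm]; gcongr)

theorem image_eq (hρ : 0 ≤ ρ)
    (hX : ∀ x ∈ X, ∀ y ∈ X, Relation.ReflTransGen (Bond X t) x y)
    (hext : ∀ g : M ≃ᵢ M, ∀ x ∈ X, ∀ x', MapsCluster X ρ g x x' → MapsCluster X (ρ + t) g x x')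
    (hx : x ∈ X) (hg : MapsCluster X ρ g x x') : g '' X = X := by
  have hmaps : ∀ {f : M ≃ᵢ M} {z z' : M}, z ∈ X → MapsCluster X ρ f z z' → Set.MapsTo f X X :=
    fun hz hf y hy => (hf.of_reflTransGen_bond (hext _) (hX _ hz y hy)).right_mem hρ hy
  have hx' : x' ∈ X := hg.right_mem hρ hx
  have hinv : Set.InvOn g.symm g X X :=
    ⟨fun y _ => g.symm_apply_apply y, fun y _ => g.apply_symm_apply y⟩
  exact (hinv.bijOn (hmaps hx hg) (hmaps hx' hg.symm)).image_eq

end MapsCluster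

theorem orbits_eq_cluster_classes_general (ht : 0 ≤ t)
    (hX : ∀ x ∈ X, ∀ y ∈ X, Relation.ReflTransGen (Bond X t) x y) (hρ : 0 ≤ ρ)
    (hequiv : ∀ x ∈ X, ∀ x' ∈ X,
      (∃ g, MapsCluster X ρ g x x') → ∃ g, MapsCluster X (ρ + t) g x x')
    (hsymm : ∀ x ∈ X, ∀ s, MapsCluster X ρ s x x → MapsCluster X (ρ + t) s x x) (hx : x ∈ X) :
    (∃ g : M ≃ᵢ M, g '' X = X ∧ g x = x') ↔ ∃ g, MapsCluster X ρ g x x' := by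
  have hext : ∀ g : M ≃ᵢ M, ∀ y ∈ X, ∀ y', MapsCluster X ρ g y y' →
      MapsCluster X (ρ + t) g y y' := by
    intro g y hy y' hg
    obtain ⟨h, hh⟩ := hequiv y hy y' (hg.right_mem hρ hy) ⟨g, hg⟩
    exact hg.extend (le_add_of_nonneg_right ht) hh (hsymm y hy)
  constructor
  · rintro ⟨g, hg, rfl⟩
    exact ⟨g, .of_image_eq hg x ρ⟩
  · rintro ⟨g, hg⟩
    exact ⟨g, hg.image_eq hρ hX hext hx, hg.1⟩

end PseudoMetricSpace

theorem TChain.reflTransGen_bond {d : ℕ} {X : Set (EuclideanSpace ℝ (Fin d))} {t : ℝ}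
    {x x' : EuclideanSpace ℝ (Fin d)} (hchain : TChain X t x x') :
    Relation.ReflTransGen (Bond X t) x x' := by
  obtain ⟨m, c, rfl, rfl, hmem, hdist⟩ := hchain
  have hbond : ∀ i ∈ Set.Ico 0 m, Bond X t (c i) (c (Order.succ i)) :=
    fun i hi => ⟨hmem i hi.2.le, hmem (i + 1) hi.2, hdist i hi.2⟩
  have hindex : Relation.ReflTransGen (fun i j => Bond X t (c i) (c j)) 0 m :=
    reflTransGen_of_succ_of_le _ hbond m.zero_le
  exact hindex.lift c fun _ _ => id

/-- Under the two local conditions, points with equivalent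
`ρ₀`-clusters lie in the same `Sym(X)`-orbit; consequently the `Sym(X)`-orbits on
`X` are exactly the classes of points with pairwise equivalent `ρ₀`-clusters. -/
theorem orbits_eq_cluster_classes {d : ℕ}
    (X : Set (EuclideanSpace ℝ (Fin d))) (t : ℝ) (ht : 0 < t) (hX : TBonded X t)
    (ρ₀ : ℝ) (hρ₀ : 0 < ρ₀)
    (h1 : ∀ x ∈ X, ∀ x' ∈ X, ClusterEquiv X ρ₀ x x' → ClusterEquiv X (ρ₀ + t) x x')
    (h2 : ∀ x ∈ X, symmGroup X x ρ₀ = symmGroup X x (ρ₀ + t)) :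
    (∀ x ∈ X, ∀ x' ∈ X, ClusterEquiv X ρ₀ x x' → ∃ g ∈ SymX X, g x = x') ∧
    (∀ x ∈ X, ∀ x' ∈ X, ((∃ g ∈ SymX X, g x = x') ↔ ClusterEquiv X ρ₀ x x')) := by
  have hiff x (hx : x ∈ X) (x') : (∃ g ∈ SymX X, g x = x') ↔ ClusterEquiv X ρ₀ x x' :=
    orbits_eq_cluster_classes_general ht.le (fun x hx y hy => (hX.2.2 x hx y hy).reflTransGen_bond)
      hρ₀.le h1 (fun x hx _ hs => (h2 x hx).subset hs) hx
  exact ⟨fun x hx x' _ => (hiff x hx x').2, fun x hx x' _ => hiff x hx x'⟩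
end

section
/- (Local criterion for m-regular t-systems) Let X ⊆ ℝ^d be a t-bonded set and let m be a positive integer. Then the number of orbits of the group Sym(X) acting on X equals m if and only if there exists ρ₀ > 0 such that N(ρ₀) = N(ρ₀ + t) = m and S_x(ρ₀) = S_x(ρ₀ + t) for every x ∈ X. -/
open Metric

/-- The cluster counting function `N(ρ)`: the number of equivalence classes of
`ρ`-clusters of `X` (as `Nat.card`, which is `0` if there are infinitely many). -/
noncomputable def NClusters {d : ℕ} (X : Set (EuclideanSpace ℝ (Fin d))) (ρ : ℝ) : ℕ :=
  Nat.card (Quot fun a b : X => ClusterEquiv X ρ (a : EuclideanSpace ℝ (Fin d)) b)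

/-- The number of orbits of `Sym(X)` acting on `X`. -/
noncomputable def numOrbits {d : ℕ} (X : Set (EuclideanSpace ℝ (Fin d))) : ℕ :=
  Nat.card (Quot fun a b : X => ∃ g ∈ SymX X, g (a : EuclideanSpace ℝ (Fin d)) = b)

/-!
If `N(ρ₀) = N(ρ₀ + t)`, then equivalent `ρ₀`-clusters have equivalent `(ρ₀ + t)`-clusters; if
moreover the cluster groups do not shrink, every isometry between `ρ₀`-clusters is one between
`(ρ₀ + t)`-clusters. These contain the `ρ₀`-clusters around all points at distance at most `t`, so
the isometry propagates along `t`-chains to a symmetry of `X`, and `ρ₀`-equivalence is the orbit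
relation.

Conversely, once a cluster spans the space, only finitely many isometries carry it onto a cluster
around a given point, and each of them that is not a symmetry of `X` fails at some finite radius.
When there are finitely many orbits, a single radius excludes all failures between orbit
representatives, and hence all failures.
-/

open Set Filter Relation

theorem setoid_eq_of_le_of_card_quotient_le {α : Type*} {r s : Setoid α} [Finite (Quotient r)]
    (hle : r ≤ s) (hcard : Nat.card (Quotient r) ≤ Nat.card (Quotient s)) : r = s := by
  have hsurj : Function.Surjective (Setoid.map_of_le hle) :=
    Quotient.ind fun a ↦ ⟨Quotient.mk r a, rfl⟩
  have hinj := (hsurj.bijective_of_nat_card_le hcard).injective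
  exact le_antisymm hle fun a b hab ↦
    Quotient.exact (hinj (Quotient.sound hab : Quotient.mk s a = Quotient.mk s b))

theorem image_eq_iff_forall_mem_iff {α β : Type*} {f : α → β} (hf : Function.Bijective f)
    {A : Set α} {B : Set β} : f '' A = B ↔ ∀ a, a ∈ A ↔ f a ∈ B := by
  rw [Set.ext_iff, hf.surjective.forall]
  simp only [hf.injective.mem_set_image]

section Metric

variable {P : Type*} [PseudoMetricSpace P] {X : Set P} {g h : P ≃ᵢ P} {x y z : P} {ρ ρ' t : ℝ}

/-- `Sym(X)` as a subgroup of the isometry group of the ambient space. -/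
def symmetrySubgroup (X : Set P) : Subgroup (P ≃ᵢ P) where
  carrier := {g | g '' X = X}
  mul_mem' {g h} (hg : g '' X = X) (hh : h '' X = X) := by
    rw [mem_ofPred_eq, IsometryEquiv.coe_mul, image_comp, hh, hg]
  one_mem' := image_id X
  inv_mem' {g} (hg : g '' X = X) := (g.toEquiv.eq_image_iff_symm_image_eq X X).1 hg.symm

/-- The isometries of the ambient space that carry the `ρ`-cluster of `X` at `x` onto the
`ρ`-cluster at `y`, and `x` to `y`. For `x = y` this is the cluster group `S_x(ρ)`. -/
def clusterIsometries (X : Set P) (ρ : ℝ) (x y : P) : Set (P ≃ᵢ P) :=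
  {g | g x = y ∧ g '' (X ∩ closedBall x ρ) = X ∩ closedBall y ρ}

theorem mem_symmetrySubgroup_iff : g ∈ symmetrySubgroup X ↔ ∀ z, z ∈ X ↔ g z ∈ X :=
  image_eq_iff_forall_mem_iff g.bijective

theorem mem_clusterIsometries_iff :
    g ∈ clusterIsometries X ρ x y ↔ g x = y ∧ ∀ z ∈ closedBall x ρ, (z ∈ X ↔ g z ∈ X) := by
  refine and_congr_right ?_
  rintro rfl
  simp only [image_eq_iff_forall_mem_iff g.bijective, mem_inter_iff, mem_closedBall, g.dist_eq,
    and_congr_left_iff]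

theorem one_mem_clusterIsometries : 1 ∈ clusterIsometries X ρ x x :=
  ⟨rfl, image_id _⟩

theorem mul_mem_clusterIsometries (hh : h ∈ clusterIsometries X ρ y z)
    (hg : g ∈ clusterIsometries X ρ x y) : h * g ∈ clusterIsometries X ρ x z := by
  refine ⟨by rw [IsometryEquiv.mul_apply, hg.1, hh.1], ?_⟩
  rw [IsometryEquiv.coe_mul, image_comp, hg.2, hh.2]

theorem inv_mem_clusterIsometries (hg : g ∈ clusterIsometries X ρ x y) :
    g⁻¹ ∈ clusterIsometries X ρ y x := by
  refine ⟨by rw [← hg.1, g.inv_apply_self], ?_⟩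
  rw [← hg.2, ← image_comp, ← IsometryEquiv.coe_mul, inv_mul_cancel, IsometryEquiv.coe_one,
    image_id]

theorem mem_clusterIsometries_of_closedBall_subset (hg : g ∈ clusterIsometries X ρ x y)
    (hsub : closedBall z ρ' ⊆ closedBall x ρ) : g ∈ clusterIsometries X ρ' z (g z) :=
  mem_clusterIsometries_iff.2
    ⟨rfl, fun w hw ↦ (mem_clusterIsometries_iff.1 hg).2 w (hsub hw)⟩

theorem clusterIsometries_antitone : Antitone fun ρ ↦ clusterIsometries X ρ x y := by
  rintro ρ ρ' hρ g hg
  have hg' := mem_clusterIsometries_of_closedBall_subset hg (closedBall_subset_closedBall hρ)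
  rwa [hg.1] at hg'

theorem mem_clusterIsometries_of_mem_symmetrySubgroup (hg : g ∈ symmetrySubgroup X) (ρ : ℝ)
    (x : P) : g ∈ clusterIsometries X ρ x (g x) :=
  mem_clusterIsometries_iff.2 ⟨rfl, fun z _ ↦ mem_symmetrySubgroup_iff.1 hg z⟩

theorem mem_symmetrySubgroup_of_forall_mem_clusterIsometries
    (hg : ∀ ρ, g ∈ clusterIsometries X ρ x y) : g ∈ symmetrySubgroup X :=
  mem_symmetrySubgroup_iff.2 fun z ↦
    (mem_clusterIsometries_iff.1 (hg (dist z x))).2 z (mem_closedBall.2 le_rfl)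

/-- Equivalence of `ρ`-clusters, as a relation between their centres. Its number of classes is
`N(ρ)`. -/
def clusterSetoid (X : Set P) (ρ : ℝ) : Setoid X where
  r a b := (clusterIsometries X ρ (a : P) b).Nonempty
  iseqv :=
    { refl := fun _ ↦ ⟨1, one_mem_clusterIsometries⟩
      symm := fun ⟨g, hg⟩ ↦ ⟨g⁻¹, inv_mem_clusterIsometries hg⟩
      trans := fun ⟨g, hg⟩ ⟨h, hh⟩ ↦ ⟨h * g, mul_mem_clusterIsometries hh hg⟩ }

/-- The relation on `X` of lying in the same orbit of the symmetry group of `X`. -/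
def orbitSetoid (X : Set P) : Setoid X where
  r a b := ∃ g ∈ symmetrySubgroup X, g (a : P) = b
  iseqv :=
    { refl := fun _ ↦ ⟨1, one_mem _, rfl⟩
      symm := fun ⟨g, hg, hgab⟩ ↦ ⟨g⁻¹, inv_mem hg, by rw [← hgab, g.inv_apply_self]⟩
      trans := fun ⟨g, hg, hgab⟩ ⟨h, hh, hhbc⟩ ↦
        ⟨h * g, mul_mem hh hg, by rw [IsometryEquiv.mul_apply, hgab, hhbc]⟩ }

theorem clusterSetoid_antitone : Antitone (clusterSetoid X) :=
  fun _ _ hρ _ _ hab ↦ hab.mono (clusterIsometries_antitone hρ)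

/-- Every isometry between `ρ`-clusters of `X` centred at points of `X` is a symmetry of `X`. -/
def ClusterIsometriesGlobal (X : Set P) (ρ : ℝ) : Prop :=
  ∀ x ∈ X, ∀ y ∈ X, clusterIsometries X ρ x y ⊆ symmetrySubgroup X

namespace ClusterIsometriesGlobal

theorem mono (hX : ClusterIsometriesGlobal X ρ) (hρ : ρ ≤ ρ') : ClusterIsometriesGlobal X ρ' :=
  fun x hx y hy ↦ (clusterIsometries_antitone hρ).trans (hX x hx y hy)

theorem clusterIsometries_eq (hX : ClusterIsometriesGlobal X ρ) (hx : x ∈ X) (hy : y ∈ X) :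
    clusterIsometries X ρ x y = {g | g ∈ symmetrySubgroup X ∧ g x = y} := by
  ext g
  constructor
  · exact fun hg ↦ ⟨hX x hx y hy hg, hg.1⟩
  · rintro ⟨hg, rfl⟩
    exact mem_clusterIsometries_of_mem_symmetrySubgroup hg ρ x

theorem clusterSetoid_eq (hX : ClusterIsometriesGlobal X ρ) :
    clusterSetoid X ρ = orbitSetoid X := by
  ext a b
  change (clusterIsometries X ρ (a : P) b).Nonempty ↔ _
  rw [hX.clusterIsometries_eq a.2 b.2]
  rfl

end ClusterIsometriesGlobal

theorem clusterIsometries_subset_of_clusterSetoid_le (hρ : ρ ≤ ρ')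
    (hle : clusterSetoid X ρ ≤ clusterSetoid X ρ')
    (hstab : ∀ x ∈ X, clusterIsometries X ρ x x ⊆ clusterIsometries X ρ' x x)
    (hx : x ∈ X) (hy : y ∈ X) : clusterIsometries X ρ x y ⊆ clusterIsometries X ρ' x y := by
  intro g hg
  obtain ⟨k, hk⟩ : (clusterIsometries X ρ' x y).Nonempty := @hle ⟨x, hx⟩ ⟨y, hy⟩ ⟨g, hg⟩
  have hkg : k⁻¹ * g ∈ clusterIsometries X ρ' x x :=
    hstab x hx (mul_mem_clusterIsometries
      (inv_mem_clusterIsometries (clusterIsometries_antitone hρ hk)) hg)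
  rw [← mul_inv_cancel_left k g]
  exact mul_mem_clusterIsometries hk hkg

theorem apply_mem_of_dist_chain (hρ : 0 ≤ ρ)
    (hstep : ∀ x ∈ X, ∀ y ∈ X, clusterIsometries X ρ x y ⊆ clusterIsometries X (ρ + t) x y)
    {x z : X}
    (hxz : ReflTransGen (fun a b : X ↦ dist a b ≤ t) x z) (hy : y ∈ X)
    (hg : g ∈ clusterIsometries X ρ x y) : g z ∈ X := by
  suffices g z ∈ X ∧ g ∈ clusterIsometries X ρ (z : P) (g z) from this.1
  induction hxz with
  | refl => rw [hg.1]; exact ⟨hy, hg⟩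
  | @tail a b _ hab ih =>
    have hga : g ∈ clusterIsometries X (ρ + t) (a : P) (g a) := hstep a a.2 (g a) ih.1 ih.2
    have hba : dist (b : P) a ≤ t := by rwa [dist_comm]
    have hb : (b : P) ∈ closedBall (a : P) (ρ + t) := mem_closedBall.2 (by linarith)
    exact ⟨((mem_clusterIsometries_iff.1 hga).2 b hb).1 b.2,
      mem_clusterIsometries_of_closedBall_subset hga
        (closedBall_subset_closedBall' (by linarith))⟩

theorem clusterIsometriesGlobal_of_dist_chain (hρ : 0 ≤ ρ)
    (hstep : ∀ x ∈ X, ∀ y ∈ X, clusterIsometries X ρ x y ⊆ clusterIsometries X (ρ + t) x y)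
    (hchain : ∀ x y : X, ReflTransGen (fun a b : X ↦ dist a b ≤ t) x y) :
    ClusterIsometriesGlobal X ρ := by
  intro x hx y hy g hg
  refine mem_symmetrySubgroup_iff.2 fun z ↦ ⟨fun hz ↦ ?_, fun hgz ↦ ?_⟩
  · exact apply_mem_of_dist_chain hρ hstep (hchain ⟨x, hx⟩ ⟨z, hz⟩) hy hg
  · have hz : g⁻¹ (g z) ∈ X := apply_mem_of_dist_chain hρ hstep (hchain ⟨y, hy⟩ ⟨g z, hgz⟩) hx
      (inv_mem_clusterIsometries hg)
    rwa [g.inv_apply_self] at hz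

theorem clusterIsometriesGlobal_of_card_quotient_le (hρ : 0 ≤ ρ) (ht : 0 ≤ t)
    [Finite (Quotient (clusterSetoid X (ρ + t)))]
    (hcard : Nat.card (Quotient (clusterSetoid X (ρ + t))) ≤
      Nat.card (Quotient (clusterSetoid X ρ)))
    (hstab : ∀ x ∈ X, clusterIsometries X ρ x x ⊆ clusterIsometries X (ρ + t) x x)
    (hchain : ∀ x y : X, ReflTransGen (fun a b : X ↦ dist a b ≤ t) x y) :
    ClusterIsometriesGlobal X ρ := by
  have hle : ρ ≤ ρ + t := le_add_of_nonneg_right ht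
  have heq : clusterSetoid X (ρ + t) = clusterSetoid X ρ :=
    setoid_eq_of_le_of_card_quotient_le (clusterSetoid_antitone hle) hcard
  exact clusterIsometriesGlobal_of_dist_chain hρ
    (fun _ hx _ hy ↦ clusterIsometries_subset_of_clusterSetoid_le hle heq.ge hstab hx hy) hchain

theorem eventually_clusterIsometries_subset_symmetrySubgroup
    (hfin : (clusterIsometries X ρ x y).Finite) :
    ∀ᶠ ρ' in atTop, clusterIsometries X ρ' x y ⊆ symmetrySubgroup X := by
  have hev : ∀ᶠ ρ' in atTop, ∀ g ∈ clusterIsometries X ρ x y,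
      g ∈ clusterIsometries X ρ' x y → g ∈ symmetrySubgroup X := by
    refine (eventually_all_finite hfin).2 fun g _ ↦ ?_
    by_cases hg : ∀ σ, g ∈ clusterIsometries X σ x y
    · exact .of_forall fun _ _ ↦ mem_symmetrySubgroup_of_forall_mem_clusterIsometries hg
    · obtain ⟨σ, hσ⟩ := not_forall.1 hg
      filter_upwards [eventually_ge_atTop σ] with ρ' hρ' hgρ'
      exact absurd (clusterIsometries_antitone hρ' hgρ') hσ
  filter_upwards [hev, eventually_ge_atTop ρ] with ρ' hρ' hle g hg
  exact hρ' g (clusterIsometries_antitone hle hg) hg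

theorem clusterIsometries_subset_symmetrySubgroup_of_apply
    (hg : g ∈ symmetrySubgroup X) (hh : h ∈ symmetrySubgroup X)
    (hsub : clusterIsometries X ρ (g x) (h y) ⊆ symmetrySubgroup X) :
    clusterIsometries X ρ x y ⊆ symmetrySubgroup X := by
  intro k hk
  have hconj : h * (k * g⁻¹) ∈ symmetrySubgroup X :=
    hsub <| mul_mem_clusterIsometries (mem_clusterIsometries_of_mem_symmetrySubgroup hh ρ y) <|
      mul_mem_clusterIsometries hk <|
        inv_mem_clusterIsometries (mem_clusterIsometries_of_mem_symmetrySubgroup hg ρ x)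
  rwa [Subgroup.mul_mem_cancel_left _ hh, Subgroup.mul_mem_cancel_right _ (inv_mem hg)] at hconj

theorem eventually_clusterIsometriesGlobal [Finite (Quotient (orbitSetoid X))]
    (hfin : ∀ x ∈ X, ∀ y ∈ X, ∃ ρ, (clusterIsometries X ρ x y).Finite) :
    ∀ᶠ ρ in atTop, ClusterIsometriesGlobal X ρ := by
  have hrep : ∀ᶠ ρ in atTop, ∀ p q : Quotient (orbitSetoid X),
      clusterIsometries X ρ (p.out : P) q.out ⊆ symmetrySubgroup X := by
    refine eventually_all.2 fun p ↦ eventually_all.2 fun q ↦ ?_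
    obtain ⟨ρ, hρ⟩ := hfin p.out p.out.2 q.out q.out.2
    exact eventually_clusterIsometries_subset_symmetrySubgroup hρ
  have hout : ∀ a : X, ∃ g ∈ symmetrySubgroup X,
      g a = (Quotient.mk (orbitSetoid X) a).out := fun a ↦
    (orbitSetoid X).symm (Quotient.mk_out a)
  filter_upwards [hrep] with ρ hρ x hx y hy
  obtain ⟨g, hg, hgx⟩ := hout ⟨x, hx⟩
  obtain ⟨h, hh, hhy⟩ := hout ⟨y, hy⟩
  refine clusterIsometries_subset_symmetrySubgroup_of_apply hg hh ?_
  rw [hgx, hhy]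
  exact hρ _ _

theorem finite_inter_of_subsingleton_inter_ball {K : Set P} {r : ℝ} (hK : IsCompact K)
    (hr : 0 < r) (hX : ∀ c, (X ∩ ball c r).Subsingleton) : (X ∩ K).Finite := by
  obtain ⟨T, -, hT, hcover⟩ := finite_cover_balls_of_compact hK hr
  refine (hT.biUnion fun c _ ↦ (hX c).finite).subset ?_
  rw [← inter_iUnion₂]
  exact inter_subset_inter_right X hcover

end Metric

section Affine

variable {V P : Type*} [NormedAddCommGroup V] [NormedSpace ℝ V] [MetricSpace P]
  [NormedAddTorsor V P] {X : Set P}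

theorem isometryEquiv_eq_of_eqOn_of_affineSpan_eq_top {W Q : Type*} [NormedAddCommGroup W]
    [NormedSpace ℝ W] [MetricSpace Q] [NormedAddTorsor W Q] {s : Set P}
    (hs : affineSpan ℝ s = ⊤) {g h : P ≃ᵢ Q} (hgh : EqOn g h s) : g = h := by
  -- By the Mazur–Ulam theorem, surjective isometries of real normed spaces are affine.
  have haff :
      g.toRealAffineIsometryEquiv.toAffineEquiv = h.toRealAffineIsometryEquiv.toAffineEquiv :=
    AffineEquiv.ext_on hs _ _ hgh
  exact IsometryEquiv.ext fun z ↦ congrArg (fun f : P ≃ᵃ[ℝ] Q ↦ f z) haff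

theorem finite_clusterIsometries {x y : P} {ρ : ℝ} (hx : (X ∩ closedBall x ρ).Finite)
    (hy : (X ∩ closedBall y ρ).Finite) (hspan : affineSpan ℝ (X ∩ closedBall x ρ) = ⊤) :
    (clusterIsometries X ρ x y).Finite := by
  have := hx.to_subtype
  have := hy.to_subtype
  let restriction (g : clusterIsometries X ρ x y) :
      ↥(X ∩ closedBall x ρ) → ↥(X ∩ closedBall y ρ) :=
    MapsTo.restrict g.1 _ _ (mapsTo_iff_image_subset.2 g.2.2.subset)
  refine Finite.of_injective restriction fun g h hgh ↦ ?_
  exact Subtype.ext <| isometryEquiv_eq_of_eqOn_of_affineSpan_eq_top hspan fun z hz ↦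
    congrArg Subtype.val (congrFun hgh ⟨z, hz⟩)

variable [FiniteDimensional ℝ V]

theorem exists_affineSpan_inter_closedBall_eq_top (hspan : affineSpan ℝ X = ⊤) (x : P) :
    ∃ ρ, affineSpan ℝ (X ∩ closedBall x ρ) = ⊤ := by
  obtain ⟨T, hTX, hT, hind⟩ := exists_affineIndependent ℝ V X
  obtain ⟨ρ, hρ⟩ := (finite_set_of_fin_dim_affineIndependent ℝ hind).isBounded.subset_closedBall x
  refine ⟨ρ, top_le_iff.1 ?_⟩
  rw [← hspan, ← hT]
  exact affineSpan_mono ℝ (subset_inter hTX hρ)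

theorem m_regular_criterion_general {t : ℝ} (ht : 0 ≤ t)
    (hfin : ∀ x ρ, (X ∩ closedBall x ρ).Finite) (hspan : affineSpan ℝ X = ⊤)
    (hchain : ∀ x y : X, ReflTransGen (fun a b : X ↦ dist a b ≤ t) x y) {m : ℕ} (hm : 0 < m) :
    Nat.card (Quotient (orbitSetoid X)) = m ↔
      ∃ ρ₀ > 0, Nat.card (Quotient (clusterSetoid X ρ₀)) = m ∧
        Nat.card (Quotient (clusterSetoid X (ρ₀ + t))) = m ∧
        ∀ x ∈ X, clusterIsometries X ρ₀ x x = clusterIsometries X (ρ₀ + t) x x := by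
  constructor
  · intro horb
    have : Finite (Quotient (orbitSetoid X)) := Nat.finite_of_card_ne_zero (horb ▸ hm.ne')
    have hglobal : ∀ᶠ ρ in atTop, ClusterIsometriesGlobal X ρ :=
      eventually_clusterIsometriesGlobal fun x _ y _ ↦
        (exists_affineSpan_inter_closedBall_eq_top hspan x).imp fun ρ ↦
          finite_clusterIsometries (hfin x ρ) (hfin y ρ)
    obtain ⟨ρ, hρ, hpos⟩ := (hglobal.and (eventually_gt_atTop 0)).exists
    have hρt : ClusterIsometriesGlobal X (ρ + t) := hρ.mono (le_add_of_nonneg_right ht)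
    refine ⟨ρ, hpos, by rw [hρ.clusterSetoid_eq, horb], by rw [hρt.clusterSetoid_eq, horb],
      fun x hx ↦ ?_⟩
    rw [hρ.clusterIsometries_eq hx hx, hρt.clusterIsometries_eq hx hx]
  · rintro ⟨ρ, hpos, hcard, hcardt, hstab⟩
    have : Finite (Quotient (clusterSetoid X (ρ + t))) :=
      Nat.finite_of_card_ne_zero (hcardt ▸ hm.ne')
    have hglobal : ClusterIsometriesGlobal X ρ :=
      clusterIsometriesGlobal_of_card_quotient_le hpos.le ht (hcardt.trans hcard.symm).le
        (fun x hx ↦ (hstab x hx).subset) hchain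
    rw [← hglobal.clusterSetoid_eq, hcard]

end Affine

section Euclidean

variable {d : ℕ} {X : Set (EuclideanSpace ℝ (Fin d))} {t : ℝ}

theorem UniformlyDiscrete.finite_inter_closedBall (hX : UniformlyDiscrete X)
    (x : EuclideanSpace ℝ (Fin d)) (ρ : ℝ) : (X ∩ closedBall x ρ).Finite := by
  obtain ⟨r, hr, hsub⟩ := hX
  exact finite_inter_of_subsingleton_inter_ball (isCompact_closedBall x ρ) hr hsub

theorem TChain.reflTransGen {x y : X} (hxy : TChain X t x y) :
    ReflTransGen (fun a b : X ↦ dist a b ≤ t) x y := by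
  obtain ⟨n, c, h0, hn, hc, hdist⟩ := hxy
  have hprefix : ∀ i (hi : i ≤ n),
      ReflTransGen (fun a b : X ↦ dist a b ≤ t) x ⟨c i, hc i hi⟩ := by
    intro i hi
    induction i with
    | zero => simp only [h0]; exact .refl
    | succ i ih => exact (ih (Nat.le_of_succ_le hi)).tail (hdist i hi)
  have hlast := hprefix n le_rfl
  simpa only [hn] using hlast

end Euclidean

/-- Local criterion for m-regular t-systems: a `t`-bonded set `X` has
exactly `m` orbits under `Sym(X)` iff there is `ρ₀ > 0` with
`N(ρ₀) = N(ρ₀ + t) = m` and `S_x(ρ₀) = S_x(ρ₀ + t)` for all `x ∈ X`. -/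
theorem m_regular_criterion {d : ℕ}
    (X : Set (EuclideanSpace ℝ (Fin d))) (t : ℝ) (ht : 0 < t) (hX : TBonded X t)
    (m : ℕ) (hm : 0 < m) :
    numOrbits X = m ↔
      ∃ ρ₀ > 0, NClusters X ρ₀ = m ∧ NClusters X (ρ₀ + t) = m ∧
        ∀ x ∈ X, symmGroup X x ρ₀ = symmGroup X x (ρ₀ + t) :=
  -- `numOrbits`, `NClusters` and `symmGroup` unfold to the corresponding terms for `orbitSetoid`,
  -- `clusterSetoid` and `clusterIsometries`.
  m_regular_criterion_general ht.le hX.1.finite_inter_closedBall hX.2.1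
    (fun x y ↦ (hX.2.2 x x.2 y y.2).reflTransGen) hm
end
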